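/- arXiv:1212.1825 — 2 statements merged into one kernel-verified Lean document; each statement's English description precedes it below -/
import Mathlib

section
/- Let V be a finite-dimensional complex vector space of complex dimension d, and let B : V → V be a map that is additive, real-linear, conjugate-linear (i.e. B(c • v) = conj(c) • B(v) for all c ∈ ℂ and v ∈ V), and bijective. Then the determinant of B, computed as a real-linear endomorphism of V regarded as a real vector space, satisfies (−1)^d · det_ℝ(B) > 0; i.e. the sign of the real determinant of a conjugate-linear automorphism of a d-dimensional complex vector space is (−1)^d. -/
/-- A conjugate-linear automorphism `B` of a finite-dimensional complex vector
space of complex dimension `d`, viewed as a real-linear endomorphism, has real determinant of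
sign `(-1)^d`. -/
theorem stmt1 {V : Type*} [AddCommGroup V] [Module ℝ V] [Module ℂ V]
    [IsScalarTower ℝ ℂ V] [FiniteDimensional ℂ V] (d : ℕ)
    (hd : Module.finrank ℂ V = d) (B : V →ₗ[ℝ] V)
    (hconj : ∀ (c : ℂ) (v : V), B (c • v) = (starRingEnd ℂ c) • B v)
    (hbij : Function.Bijective B) :
    0 < (-1 : ℝ) ^ d * LinearMap.det B := by
  let e : V ≃ₗ[ℂ] (Fin d → ℂ) := (Module.finBasisOfFinrankEq ℂ V hd).equivFun
  let K : (Fin d → ℂ) →ₗ[ℝ] (Fin d → ℂ) :=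
    LinearMap.pi fun i => Complex.conjAe.toLinearMap.comp (LinearMap.proj i)
  have hKapp : ∀ x i, K x i = starRingEnd ℂ (x i) := fun x i => rfl
  have hKK : ∀ x, K (K x) = x := fun x => by ext i; simp [hKapp]
  have hKs : ∀ (c : ℂ) x, K (c • x) = starRingEnd ℂ c • K x := fun c x => by
    ext i; simp [hKapp]
  have hK : LinearMap.det K = (-1 : ℝ) ^ d := by
    have := LinearMap.det_pi (R := ℝ) (M := ℂ) (ι := Fin d)
      (fun _ => Complex.conjAe.toLinearMap)
    rw [show K = _ from rfl, this]
    simp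
  let D : (Fin d → ℂ) →ₗ[ℝ] (Fin d → ℂ) :=
    ((e.restrictScalars ℝ : V ≃ₗ[ℝ] (Fin d → ℂ)) : V →ₗ[ℝ] (Fin d → ℂ)) ∘ₗ B ∘ₗ
      ((e.restrictScalars ℝ).symm : (Fin d → ℂ) →ₗ[ℝ] V)
  have hDapp : ∀ x, D x = e (B (e.symm x)) := fun x => rfl
  have hD : LinearMap.det D = LinearMap.det B := LinearMap.det_conj B (e.restrictScalars ℝ)
  let C : (Fin d → ℂ) →ₗ[ℂ] (Fin d → ℂ) :=
    { toFun := fun x => D (K x)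
      map_add' := fun x y => by simp
      map_smul' := fun c x => by simp [hKs, hDapp, hconj] }
  have hCK : D = (C.restrictScalars ℝ) ∘ₗ K := by
    refine LinearMap.ext fun x => ?_
    change D x = D (K (K x))
    rw [hKK]
  have hCinj : Function.Injective C := by
    intro x y h
    have h1 : e (B (e.symm (K x))) = e (B (e.symm (K y))) := h
    have h2 := e.symm.injective (hbij.1 (e.injective h1))
    rw [← hKK x, h2, hKK]
  have hC0 : LinearMap.det C ≠ 0 := by
    intro h
    have := LinearMap.bot_lt_ker_of_det_eq_zero h
    rw [LinearMap.ker_eq_bot.mpr hCinj] at this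
    exact lt_irrefl _ this
  have hdet : LinearMap.det (C.restrictScalars ℝ) = Complex.normSq (LinearMap.det C) := by
    rw [LinearMap.det_restrictScalars, Algebra.norm_complex_apply]
  rw [← hD, hCK, LinearMap.det_comp, hK, hdet]
  have : (-1 : ℝ) ^ d * (-1) ^ d = 1 := by rw [← mul_pow]; simp
  have hp := Complex.normSq_pos.mpr hC0
  calc (0:ℝ) < _ := hp
    _ = _ := by linear_combination (-Complex.normSq (LinearMap.det C)) * this
end

section
/- Let ε ∈ ℤ with ε = 1 or ε = −1, and let G : ℕ → ℕ → ℤ satisfy: G(1, k) = (−1)^k · 2^k + ε · 4^k for all k ≥ 0, and G(h+1, k) = 24 · G(h, 0) · ((−1)^k · 2^k + 4^k) + 3 · G(h, 1) · ((−1)^{k+1} · 2^{k+1} + 4^{k+1}) for all h ≥ 1 and k ≥ 0. Then G(h, k) = 36^{h−1} · 2^k · (ε · 2^{k+h−1} + (−1)^k) for all h ≥ 1 and k ≥ 0. -/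
/-- The recursion for the degree-4 spin Hurwitz numbers `H^{h,p}_{(31)^k}` has the
closed-form solution `36^(h-1) · 2^k · (ε · 2^(k+h-1) + (-1)^k)`. -/
theorem stmt4 (ε : ℤ) (hε : ε = 1 ∨ ε = -1) (G : ℕ → ℕ → ℤ)
    (h1 : ∀ k : ℕ, G 1 k = (-1) ^ k * 2 ^ k + ε * 4 ^ k)
    (hrec : ∀ h k : ℕ, 1 ≤ h →
        G (h + 1) k = 24 * G h 0 * ((-1) ^ k * 2 ^ k + 4 ^ k) +
          3 * G h 1 * ((-1) ^ (k + 1) * 2 ^ (k + 1) + 4 ^ (k + 1))) :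
    ∀ h k : ℕ, 1 ≤ h →
      G h k = 36 ^ (h - 1) * 2 ^ k * (ε * 2 ^ (k + h - 1) + (-1) ^ k) := by
  have key : ∀ n k : ℕ,
      G (n + 1) k = 36 ^ n * 2 ^ k * (ε * 2 ^ (k + n) + (-1) ^ k) := by
    intro n
    induction n with
    | zero =>
      intro k
      have h4 : (4 : ℤ) ^ k = 2 ^ k * 2 ^ k := by rw [← mul_pow]; norm_num
      rw [h1 k, h4]
      simp only [Nat.add_zero]
      ring
    | succ n ih =>
      intro k
      have h4 : (4 : ℤ) ^ k = 2 ^ k * 2 ^ k := by rw [← mul_pow]; norm_num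
      rw [hrec (n + 1) k (by omega), ih 0, ih 1]
      simp only [pow_add, h4, pow_zero, pow_one]
      ring
  intro h k hh
  obtain ⟨n, rfl⟩ : ∃ n, h = n + 1 := ⟨h - 1, by omega⟩
  exact key n k
end
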